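/- Let d ≥ 3 be odd, n = (d²+1)/2, and in R = 𝔽₂[x]/(xⁿ−1) set a = 1+x and b = (1+x)·P_d(x). Define O : R² → R² by O(u, v) = (x·v(x^d), u(x^d)), where x ↦ x^d is the ring automorphism of R (which is bijective since gcd(d, n) = 1 and d² ≡ −1 (mod n)). Then: (i) O is an 𝔽₂-linear bijection induced by a permutation of the 2n coordinate positions; (ii) O(C₂(a,b)) = C₂(a,b) and O(C₁(a,b)) = C₁(a,b); (iii) O((1, P_d(x))) ∈ (1, P_d(x)) + C₂(a,b); (iv) with u(x) = 1 + x^d + ⋯ + x^{d·((d−1)/2 − 1)} and v(x) = x^{n−(d+1)/2} + ⋯ + x^{n−1}, O maps the coset (u, v) + C₂(a,b) onto the coset (x·v(x^d), u(x^d)) + C₂(a,b) and maps (x·v(x^d), u(x^d)) + C₂(a,b) onto (u, v) + C₂(a,b). (Hence O implements a logical CNOT between the two logical qubits by relabeling data qubits.) -/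

import Mathlib

open Polynomial

noncomputable section

/-- `R2 n` is the ring `𝔽₂[x]/(xⁿ − 1)`. -/
abbrev R2 (n : ℕ) : Type := AdjoinRoot (X ^ n - 1 : (ZMod 2)[X])

/-- The image of `x` in `𝔽₂[x]/(xⁿ − 1)`. -/
def xR (n : ℕ) : R2 n := AdjoinRoot.root _

/-- The quotient map `𝔽₂[x] → 𝔽₂[x]/(xⁿ − 1)`. -/
def mkR (n : ℕ) : (ZMod 2)[X] →+* R2 n := AdjoinRoot.mk _

lemma xR_pow_n (n : ℕ) : xR n ^ n = 1 := by
  have h : (AdjoinRoot.mk (X ^ n - 1 : (ZMod 2)[X])) (X ^ n - 1) = 0 := AdjoinRoot.mk_self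
  rw [map_sub, map_pow, AdjoinRoot.mk_X, map_one, sub_eq_zero] at h
  exact h

/-- The unique representative of degree `< n` of an element of `𝔽₂[x]/(xⁿ − 1)` (junk if `n = 0`). -/
def repP {n : ℕ} (u : R2 n) : (ZMod 2)[X] :=
  if h : n = 0 then 0
  else AdjoinRoot.modByMonicHom (by simpa using monic_X_pow_sub_C (1 : ZMod 2) h) u

/-- The Hamming weight of an element of `𝔽₂[x]/(xⁿ − 1)`: the number of nonzero coefficients
of its degree-`< n` representative. -/
def wt {n : ℕ} (u : R2 n) : ℕ := (repP u).support.card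

/-- Coefficient of the degree-`< n` representative, indexed by `ℤ/n`. -/
def coeffZ {n : ℕ} (u : R2 n) (i : ZMod n) : ZMod 2 := (repP u).coeff i.val

/-- The X-stabilizer space `C₂(a,b) = {(r·a, r·b) : r ∈ R}` of the GB code of `(a,b)`. -/
def C2set (n : ℕ) (a b : R2 n) : Set (R2 n × R2 n) := {p | ∃ r : R2 n, p = (r * a, r * b)}

/-- The space `C₁(a,b) = {(u,v) : u·b + v·a = 0}` of the GB code of `(a,b)`. -/
def C1set (n : ℕ) (a b : R2 n) : Set (R2 n × R2 n) := {p | p.1 * b + p.2 * a = 0}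

/-- The (X-side) minimum distance of the GB code of `(a,b)`. -/
def dGB (n : ℕ) (a b : R2 n) : ℕ :=
  sInf {k | ∃ p ∈ C1set n a b \ C2set n a b, wt p.1 + wt p.2 = k}

/-- `P_m(x) = 1 + x + ⋯ + x^{m−1}` as a polynomial over `𝔽₂`. -/
def PmP (m : ℕ) : (ZMod 2)[X] := ∑ i ∈ Finset.range m, X ^ i

/-- `P_m(x) = 1 + x + ⋯ + x^{m−1}` as an element of `𝔽₂[x]/(xⁿ − 1)`. -/
def PmR (n m : ℕ) : R2 n := ∑ i ∈ Finset.range m, xR n ^ i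

/-- The ring endomorphism of `𝔽₂[x]/(xⁿ − 1)` induced by `x ↦ x^d`. -/
def substHom (n d : ℕ) : R2 n →+* R2 n :=
  AdjoinRoot.lift (algebraMap (ZMod 2) (R2 n)) (xR n ^ d) (by
    simp only [eval₂_sub, eval₂_X_pow, eval₂_one]
    rw [← pow_mul, mul_comm d n, pow_mul, xR_pow_n, one_pow, sub_self])

/-- The Euclidean inner product on `𝔽₂²ⁿ`, in terms of pairs `(u₁, u₂)` of elements of
`𝔽₂[x]/(xⁿ − 1)` (representing the concatenated binary vector `(u₁ | u₂)`). -/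
def eucInner (n : ℕ) (p q : R2 n × R2 n) : ZMod 2 :=
  ∑ i ∈ Finset.range n,
    ((repP p.1).coeff i * (repP q.1).coeff i + (repP p.2).coeff i * (repP q.2).coeff i)

/-- The symplectic inner product of `u₁ + w·u₂` and `v₁ + w·v₂`, i.e.
`Σᵢ (u₁ᵢ·v₂ᵢ + u₂ᵢ·v₁ᵢ)`, in terms of the pairs `(u₁,u₂)`, `(v₁,v₂)`. -/
def sympInner (n : ℕ) (p q : R2 n × R2 n) : ZMod 2 :=
  ∑ i ∈ Finset.range n,
    ((repP p.1).coeff i * (repP q.2).coeff i + (repP p.2).coeff i * (repP q.1).coeff i)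

/-- Euclidean dual of a set of (pairs representing) binary vectors of length `2n`. -/
def eucDual (n : ℕ) (S : Set (R2 n × R2 n)) : Set (R2 n × R2 n) :=
  {p | ∀ q ∈ S, eucInner n q p = 0}

/-- Symplectic dual of a set of (pairs representing) vectors of `𝔽₄ⁿ`. -/
def sympDual (n : ℕ) (S : Set (R2 n × R2 n)) : Set (R2 n × R2 n) :=
  {p | ∀ q ∈ S, sympInner n q p = 0}

/-- Number of nonzero `𝔽₄`-coordinates of `u₁ + w·u₂`, in terms of the pair `(u₁,u₂)`. -/
def wt4 (n : ℕ) (p : R2 n × R2 n) : ℕ := ((repP p.1).support ∪ (repP p.2).support).card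

/-- The `2n` binary coordinates of a pair `(u₁,u₂)`. -/
def coords {n : ℕ} (p : R2 n × R2 n) : (Fin n ⊕ Fin n) → ZMod 2 :=
  Sum.elim (fun i => (repP p.1).coeff i) (fun i => (repP p.2).coeff i)

/-- Vertex set of the Tanner graph: check vertices `x_t` (left) and data vertices
`q_s`, `q'_s` (right). -/
def TV (n : ℕ) : Type := (ZMod n) ⊕ ((ZMod n) ⊕ (ZMod n))

/-- `trel a b v w` holds iff `v` is a check vertex `x_t`, `w` is a data vertex, and they are
connected: `x_t ~ q_s` iff `a_{s−t} = 1`, and `x_t ~ q'_s` iff `b_{s−t} = 1`. -/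
def trel {n : ℕ} (a b : R2 n) (v w : TV n) : Prop :=
  ∃ t s : ZMod n, v = Sum.inl t ∧
    ((w = Sum.inr (Sum.inl s) ∧ coeffZ a (s - t) = 1) ∨
     (w = Sum.inr (Sum.inr s) ∧ coeffZ b (s - t) = 1))

/-- The Tanner graph `T(a,b)` of the GB code of `(a,b)`. -/
def tanner (n : ℕ) (a b : R2 n) : SimpleGraph (TV n) where
  Adj v w := trel a b v w ∨ trel a b w v
  symm := ⟨fun v w h => Or.symm h⟩
  loopless := ⟨by
    rintro v (⟨t, s, hv, hw⟩ | ⟨t, s, hv, hw⟩) <;>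
      rcases hw with ⟨hw, -⟩ | ⟨hw, -⟩ <;> (subst hv; simp at hw)⟩

end

noncomputable section

lemma two_eq_zero_R2 (n : ℕ) : (2 : R2 n) = 0 := by
  rw [← map_ofNat (algebraMap (ZMod 2) (R2 n)) 2, show (OfNat.ofNat 2 : ZMod 2) = 0 from rfl,
    map_zero]

lemma xR_pow_mod (n k : ℕ) : xR n ^ (k % n) = xR n ^ k := by
  conv_rhs => rw [← Nat.mod_add_div k n, pow_add, pow_mul, xR_pow_n, one_pow, mul_one]

lemma xR_pow_congr {n k l : ℕ} (h : k ≡ l [MOD n]) : xR n ^ k = xR n ^ l := by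
  rw [← xR_pow_mod n k, ← xR_pow_mod n l, h]

lemma substHom_xR (n d : ℕ) : substHom n d (xR n) = xR n ^ d := by
  unfold substHom
  exact AdjoinRoot.lift_root _

lemma repP_add {n : ℕ} (u v : R2 n) : repP (u + v) = repP u + repP v := by
  unfold repP
  split_ifs <;> simp

lemma repP_zero {n : ℕ} : repP (0 : R2 n) = 0 := by
  unfold repP
  split_ifs <;> simp

lemma repP_xR_pow {n k : ℕ} (hk : k < n) : repP (xR n ^ k) = X ^ k := by
  have hn : n ≠ 0 := by omega
  have hm : (X ^ n - 1 : (ZMod 2)[X]).Monic := by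
    simpa using monic_X_pow_sub_C (1 : ZMod 2) hn
  have hx : xR n ^ k = AdjoinRoot.mk (X ^ n - 1 : (ZMod 2)[X]) (X ^ k) := by
    rw [map_pow, AdjoinRoot.mk_X, xR]
  have hdeg : (X ^ n - 1 : (ZMod 2)[X]).degree = n := by
    simpa using degree_X_pow_sub_C (Nat.pos_of_ne_zero hn) (1 : ZMod 2)
  rw [repP, dif_neg hn, hx, AdjoinRoot.modByMonicHom_mk, modByMonic_eq_self_iff hm, hdeg,
    degree_X_pow]
  exact_mod_cast hk

/-- A property of elements of `R2 n` that is closed under addition holds everywhere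
once it holds at zero and at all powers of `x`. -/
lemma R2_induction {n : ℕ} {P : R2 n → Prop} (u : R2 n) (h0 : P 0)
    (hadd : ∀ u v, P u → P v → P (u + v)) (hpow : ∀ k, P (xR n ^ k)) : P u := by
  induction u using AdjoinRoot.induction_on with
  | ih p =>
    induction p using Polynomial.induction_on' with
    | add p q hp hq => rw [map_add]; exact hadd _ _ hp hq
    | monomial k c =>
      have hc : c = 0 ∨ c = 1 := by revert c; decide
      rcases hc with rfl | rfl
      · simpa using h0
      · have : AdjoinRoot.mk (X ^ n - 1 : (ZMod 2)[X]) (monomial k 1) = xR n ^ k := by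
          rw [monomial_one_right_eq_X_pow, map_pow, AdjoinRoot.mk_X, xR]
        rw [this]; exact hpow k

/-- An additive map permuting the powers of `x` permutes coefficients accordingly. -/
lemma coeff_repP_of_perm {n : ℕ} (hn : 0 < n) (f : R2 n →+ R2 n) (σ : Equiv.Perm (Fin n))
    (hf : ∀ i : Fin n, f (xR n ^ (i : ℕ)) = xR n ^ (σ i : ℕ)) (u : R2 n) (i : Fin n) :
    (repP (f u)).coeff i = (repP u).coeff (σ.symm i) := by
  induction u using R2_induction with
  | h0 => simp [repP_zero]
  | hadd u v hu hv => simp [repP_add, hu, hv]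
  | hpow k =>
    have hk := Nat.mod_lt k hn
    rw [← xR_pow_mod n k, hf ⟨k % n, hk⟩, repP_xR_pow hk, repP_xR_pow (Fin.is_lt _),
      coeff_X_pow, coeff_X_pow]
    refine if_congr ?_ rfl rfl
    rw [Fin.val_inj, ← σ.symm_apply_eq, Fin.ext_iff]

lemma exists_perm_affine {n d : ℕ} (hn : 0 < n) (hdn : Nat.Coprime n d) (c : ℕ) :
    ∃ σ : Equiv.Perm (Fin n), ∀ i, (σ i : ℕ) = (d * i + c) % n := by
  let f : Fin n → Fin n := fun i => ⟨(d * i + c) % n, Nat.mod_lt _ hn⟩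
  have hf : Function.Injective f := by
    intro i j hij
    have h : d * i + c ≡ d * j + c [MOD n] := congrArg Fin.val hij
    have h' : (i : ℕ) ≡ j [MOD n] :=
      Nat.ModEq.cancel_left_of_coprime hdn (Nat.ModEq.add_right_cancel' c h)
    exact Fin.ext (h'.eq_of_lt_of_lt i.is_lt j.is_lt)
  exact ⟨Equiv.ofBijective f (Finite.injective_iff_bijective.mp hf), fun i => rfl⟩

lemma one_add_dvd_pow_add_pow (n j k : ℕ) : 1 + xR n ∣ xR n ^ j + xR n ^ k := by
  have h2 := two_eq_zero_R2 n
  have h (m : ℕ) : 1 + xR n ∣ xR n ^ m - 1 := by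
    have : 1 + xR n = xR n - 1 := by linear_combination h2
    rw [this]
    exact sub_one_dvd_pow_sub_one _ _
  have e : xR n ^ j + xR n ^ k = (xR n ^ j - 1) + (xR n ^ k - 1) := by
    linear_combination h2
  rw [e]
  exact dvd_add (h j) (h k)

/-- For odd `n`, the annihilator of `1 + x` meets the ideal generated by `1 + x` trivially. -/
lemma eq_zero_of_one_add_mul_eq_zero {n : ℕ} (hn : Odd n) {f : R2 n}
    (hf : (1 + xR n) * f = 0) (hdvd : 1 + xR n ∣ f) : f = 0 := by
  have h2 := two_eq_zero_R2 n
  obtain ⟨g, rfl⟩ := hdvd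
  set f := (1 + xR n) * g with hfdef
  have hx : xR n * f = f := by linear_combination hf - f * h2
  have hxk (k : ℕ) : xR n ^ k * f = f := by
    induction k with
    | zero => simp
    | succ k ih => rw [pow_succ, mul_assoc, hx, ih]
  have hJ : (∑ i ∈ Finset.range n, xR n ^ i) * f = f := by
    rw [Finset.sum_mul, Finset.sum_congr rfl fun i _ => hxk i, Finset.sum_const,
      Finset.card_range, nsmul_eq_mul]
    obtain ⟨k, rfl⟩ := hn
    push_cast
    linear_combination k * f * h2
  have hg := geom_sum_mul (xR n) n
  rw [xR_pow_n] at hg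
  rw [← hJ, hfdef]
  linear_combination g * hg + (∑ i ∈ Finset.range n, xR n ^ i) * g * h2

section Parameters

variable {d n : ℕ}

lemma coprime_of_two_mul_eq (hn : 2 * n = d ^ 2 + 1) : Nat.Coprime n d := by
  rw [Nat.coprime_iff_gcd_eq_one, ← Nat.dvd_one]
  have h1 : Nat.gcd n d ∣ d ^ 2 + 1 := hn ▸ (Nat.gcd_dvd_left n d).mul_left 2
  exact (Nat.dvd_add_right ((Nat.gcd_dvd_right n d).trans (dvd_pow_self d two_ne_zero))).mp h1

lemma xR_mul_pow_sq (hn : 2 * n = d ^ 2 + 1) : xR n * xR n ^ (d * d) = 1 := by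
  rw [← pow_succ', show d * d + 1 = n * 2 by nlinarith, pow_mul, xR_pow_n, one_pow]

lemma substHom_iterate_four (hn : 2 * n = d ^ 2 + 1) (u : R2 n) :
    substHom n d (substHom n d (substHom n d (substHom n d u))) = u := by
  have h := xR_mul_pow_sq hn
  induction u using R2_induction with
  | h0 => simp
  | hadd u v hu hv => simp [hu, hv]
  | hpow k =>
    simp only [map_pow, substHom_xR, ← pow_mul]
    rw [show d * (d * (d * (d * k))) = d * d * (d * d) * k by ring, pow_mul]
    congr 1
    have h' : xR n ^ (d * d) * xR n ^ (d * d * (d * d)) = 1 := by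
      rw [pow_mul _ (d * d) (d * d), ← mul_pow, h, one_pow]
    linear_combination xR n * h' - xR n ^ (d * d * (d * d)) * h

lemma substHom_bijective (hn : 2 * n = d ^ 2 + 1) : Function.Bijective (substHom n d) := by
  have h := substHom_iterate_four hn
  refine ⟨fun u v huv => ?_, fun u => ⟨_, h u⟩⟩
  rw [← h u, ← h v, huv]

lemma one_add_mul_PmR : (1 + xR n) * PmR n d = 1 + xR n ^ d := by
  have h := geom_sum_mul (xR n) d
  unfold PmR
  linear_combination h + (∑ i ∈ Finset.range d, xR n ^ i - 1) * two_eq_zero_R2 n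

lemma substHom_PmR : substHom n d (PmR n d) = ∑ i ∈ Finset.range d, xR n ^ (d * i) := by
  simp only [PmR, map_sum, map_pow, substHom_xR, pow_mul]

/-- `P_d(x)` is a unit with inverse `x · P_d(x^d)`. -/
lemma xR_mul_substHom_PmR_mul_PmR (hn : 2 * n = d ^ 2 + 1) :
    xR n * substHom n d (PmR n d) * PmR n d = 1 := by
  have h2 := two_eq_zero_R2 n
  have hprod (m : ℕ) : (∑ i ∈ Finset.range m, xR n ^ (d * i)) * PmR n d =
      ∑ k ∈ Finset.range (d * m), xR n ^ k := by
    induction m with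
    | zero => simp
    | succ m ih =>
      rw [Finset.sum_range_succ, add_mul, ih, Nat.mul_succ, Finset.sum_range_add, PmR,
        Finset.mul_sum]
      simp only [pow_add]
  have hall : ∑ k ∈ Finset.range (d * d + 1), xR n ^ k = 0 := by
    rw [show d * d + 1 = n + n by nlinarith, Finset.sum_range_add]
    simp only [pow_add, xR_pow_n, one_mul]
    linear_combination (∑ i ∈ Finset.range n, xR n ^ i) * h2
  rw [Finset.sum_range_succ', pow_zero] at hall
  simp only [pow_succ'] at hall
  rw [← Finset.mul_sum] at hall
  rw [mul_assoc, substHom_PmR, hprod]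
  linear_combination hall - h2

lemma one_add_dvd_one_add_xR_mul_substHom_PmR (hd : Odd d) :
    1 + xR n ∣ 1 + xR n * substHom n d (PmR n d) := by
  have h2 := two_eq_zero_R2 n
  obtain ⟨m, hm⟩ := hd
  have hsum : 1 + xR n ∣ ∑ i ∈ Finset.range d, (xR n ^ (d * i + 1) + xR n ^ 0) :=
    Finset.dvd_sum fun i _ => one_add_dvd_pow_add_pow n _ _
  convert hsum using 1
  have hdc : (d : R2 n) = 2 * m + 1 := by rw [hm]; push_cast; ring
  rw [Finset.sum_add_distrib, substHom_PmR, Finset.mul_sum]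
  simp only [pow_zero, Finset.sum_const, Finset.card_range, nsmul_eq_mul, mul_one, pow_succ']
  linear_combination -hdc - m * h2

/-- Applying `O` twice to `(u, v)` stays in the coset of `(u, v)`. -/
lemma exists_stabilizer_shift (hd : Odd d) (hn : 2 * n = d ^ 2 + 1) {u v : R2 n}
    (hu : u = ∑ i ∈ Finset.range ((d - 1) / 2), xR n ^ (d * i))
    (hv : v = ∑ i ∈ Finset.Ico (n - (d + 1) / 2) n, xR n ^ i) :
    ∃ r : R2 n, xR n * substHom n d (substHom n d u) = u + r * (1 + xR n) ∧
      xR n ^ d * substHom n d (substHom n d v) = v + r * ((1 + xR n) * PmR n d) := by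
  have h2 := two_eq_zero_R2 n
  have hy := xR_mul_pow_sq hn
  obtain ⟨m, hm⟩ := hd
  have hnm : n = 2 * m ^ 2 + 2 * m + 1 := by subst hm; nlinarith
  have hodd : Odd n := ⟨m ^ 2 + m, by rw [hnm]; ring⟩
  rw [show (d - 1) / 2 = m by omega] at hu
  rw [show (d + 1) / 2 = m + 1 by omega] at hv
  obtain ⟨l, hl⟩ : ∃ l, n = l + (m + 1) := ⟨2 * m ^ 2 + m, by rw [hnm]; ring⟩
  have hdm : d * m = l := by subst hm; nlinarith
  rw [show n - (m + 1) = l by omega] at hv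
  set y := xR n ^ (d * d) with hydef
  have hx2 : substHom n d (substHom n d (xR n)) = y := by
    rw [substHom_xR, map_pow, substHom_xR, ← pow_mul]
  have hu2 : substHom n d (substHom n d u) = ∑ i ∈ Finset.range m, y ^ (d * i) := by
    simp only [hu, map_sum, map_pow, hx2]
  have hv2 : substHom n d (substHom n d v) = ∑ i ∈ Finset.Ico l n, y ^ i := by
    simp only [hv, map_sum, map_pow, hx2]
  have hudvd : 1 + xR n ∣ u + xR n * substHom n d (substHom n d u) := by
    rw [hu2, hu, Finset.mul_sum, ← Finset.sum_add_distrib]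
    refine Finset.dvd_sum fun i _ => ?_
    rw [hydef, ← pow_mul, ← pow_succ']
    exact one_add_dvd_pow_add_pow n _ _
  have hvdvd : 1 + xR n ∣ v + xR n ^ d * substHom n d (substHom n d v) := by
    rw [hv2, hv, Finset.mul_sum, ← Finset.sum_add_distrib]
    refine Finset.dvd_sum fun i _ => ?_
    rw [hydef, ← pow_mul, ← pow_add]
    exact one_add_dvd_pow_add_pow n _ _
  obtain ⟨r, hr⟩ := hudvd
  refine ⟨r, by linear_combination hr - u * h2, ?_⟩
  have gu : u * (xR n ^ d - 1) = xR n ^ l - 1 := by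
    rw [hu, ← hdm]; simp only [pow_mul]; exact geom_sum_mul _ _
  have gu2 : substHom n d (substHom n d u) * (y ^ d - 1) = y ^ l - 1 := by
    rw [hu2, ← hdm]; simp only [pow_mul]; exact geom_sum_mul _ _
  have gv : v * (xR n - 1) = 1 - xR n ^ l := by
    rw [hv, geom_sum_Ico_mul _ (by omega), xR_pow_n]
  have gv2 : substHom n d (substHom n d v) * (y - 1) = 1 - y ^ l := by
    rw [hv2, geom_sum_Ico_mul _ (by omega), hydef, pow_right_comm, xR_pow_n, one_pow]
  have hyd : xR n ^ d * y ^ d = 1 := by rw [← mul_pow, hy, one_pow]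
  have hP := one_add_mul_PmR (n := n) (d := d)
  have key : (1 + xR n) * (r * ((1 + xR n) * PmR n d) +
      (v + xR n ^ d * substHom n d (substHom n d v))) = 0 := by
    generalize substHom n d (substHom n d u) = U at *
    generalize substHom n d (substHom n d v) = V at *
    generalize PmR n d = P at *
    generalize xR n ^ d = D at *
    generalize y ^ d = E at *
    generalize y ^ l = F at *
    generalize xR n ^ l = G at *
    generalize xR n = x at *
    have e1 : (1 + x) * (r * ((1 + x) * P)) = (1 + D) * (u + x * U) := by
      linear_combination (1 + x) * r * hP - (1 + D) * hr
    have e2 : (1 + D) * u = 1 + G := by linear_combination gu + (u - 1) * h2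
    have e3 : (1 + D) * U = D * (1 + F) := by
      linear_combination D * gu2 - U * hyd + (D * U - D) * h2
    have e4 : (1 + x) * v = 1 + G := by linear_combination gv + (v - G) * h2
    have e5 : (1 + x) * V = x * (1 + F) := by
      linear_combination x * gv2 - V * hy + (x * V - x * F) * h2
    linear_combination e1 + e2 + x * e3 + e4 + D * e5 + (1 + G + x * D * (1 + F)) * h2
  have hz := eq_zero_of_one_add_mul_eq_zero hodd key
    (dvd_add ((Dvd.intro _ rfl).mul_left r) hvdvd)
  linear_combination hz - (v + r * ((1 + xR n) * PmR n d)) * h2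

end Parameters

/-- For the `[[d²+1, 2, d]]` GB code (`d ≥ 3` odd, `2n = d²+1`,
`a = 1+x`, `b = (1+x)·P_d(x)`), define `O(u,v) = (x·v(x^d), u(x^d))` (with `x ↦ x^d`
the ring endomorphism `substHom n d`).  Then:
(i) `O` is an `𝔽₂`-linear bijection induced by a permutation of the `2n` coordinate
positions;
(ii) `O` maps `C₂(a,b)` onto itself and `C₁(a,b)` onto itself;
(iii) `O((1, P_d)) ∈ (1, P_d) + C₂(a,b)`;
(iv) with `u, v` as in Statement 8, `O` maps the coset `(u,v) + C₂` onto
`(x·v(x^d), u(x^d)) + C₂` and vice versa.  (Hence `O` implements a logical CNOT by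
relabeling data qubits.) -/
theorem stmt_10 (d n : ℕ) (hd : Odd d) (hd3 : 3 ≤ d) (hn : 2 * n = d ^ 2 + 1)
    (a b u v : R2 n) (ha : a = 1 + xR n) (hb : b = (1 + xR n) * PmR n d)
    (hu : u = ∑ i ∈ Finset.range ((d - 1) / 2), xR n ^ (d * i))
    (hv : v = ∑ i ∈ Finset.Ico (n - (d + 1) / 2) n, xR n ^ i)
    (O : R2 n × R2 n → R2 n × R2 n)
    (hO : O = fun p => (xR n * substHom n d p.2, substHom n d p.1)) :
    ((∀ p q, O (p + q) = O p + O q) ∧ Function.Bijective O ∧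
      ∃ π : (Fin n ⊕ Fin n) ≃ (Fin n ⊕ Fin n), ∀ p k, coords (O p) k = coords p (π k)) ∧
    (O '' C2set n a b = C2set n a b ∧ O '' C1set n a b = C1set n a b) ∧
    (∃ c ∈ C2set n a b, O ((1 : R2 n), PmR n d) = ((1 : R2 n), PmR n d) + c) ∧
    (O '' {q | ∃ c ∈ C2set n a b, q = (u, v) + c} =
        {q | ∃ c ∈ C2set n a b, q = (xR n * substHom n d v, substHom n d u) + c} ∧
      O '' {q | ∃ c ∈ C2set n a b, q = (xR n * substHom n d v, substHom n d u) + c} =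
        {q | ∃ c ∈ C2set n a b, q = (u, v) + c}) := by
  have h2 := two_eq_zero_R2 n
  have hn0 : 0 < n := by nlinarith
  have hy := xR_mul_pow_sq hn
  obtain ⟨hinj, hsurj⟩ := substHom_bijective hn
  have hcop := coprime_of_two_mul_eq hn
  have hOp (p : R2 n × R2 n) : O p = (xR n * substHom n d p.2, substHom n d p.1) := by rw [hO]
  have hadd : ∀ p q, O (p + q) = O p + O q := fun p q => by simp [hOp, mul_add]
  have hcancel : ∀ {s t : R2 n}, xR n * s = xR n * t → s = t := fun {s t} h => by
    linear_combination xR n ^ (d * d) * h - (s - t) * hy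
  have hbij : Function.Bijective O := by
    constructor
    · intro p q hpq
      rw [hOp, hOp, Prod.mk.injEq] at hpq
      exact Prod.ext (hinj hpq.2) (hinj (hcancel hpq.1))
    · intro q
      obtain ⟨s, hs⟩ := hsurj q.2
      obtain ⟨t, ht⟩ := hsurj (xR n ^ (d * d) * q.1)
      refine ⟨(s, t), ?_⟩
      rw [hOp, hs, ht, ← mul_assoc, hy, one_mul]
  have hab : b = substHom n d a := by
    rw [hb, one_add_mul_PmR, ha, map_add, map_one, substHom_xR]
  have hba : xR n * substHom n d b = a := by
    rw [hb, one_add_mul_PmR, ha, map_add, map_one, map_pow, substHom_xR, ← pow_mul]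
    linear_combination hy
  have hOC (r : R2 n) : O (r * a, r * b) = (substHom n d r * a, substHom n d r * b) := by
    rw [hOp, map_mul, map_mul, ← hab, mul_left_comm, hba]
  have hC2 : O '' C2set n a b = C2set n a b := by
    ext q
    constructor
    · rintro ⟨_, ⟨r, rfl⟩, rfl⟩
      exact ⟨_, hOC r⟩
    · rintro ⟨r, rfl⟩
      obtain ⟨s, rfl⟩ := hsurj r
      exact ⟨_, ⟨s, rfl⟩, hOC s⟩
  have hmem (p : R2 n × R2 n) : O p ∈ C1set n a b ↔ p ∈ C1set n a b := by
    have e : (O p).1 * b + (O p).2 * a = xR n * substHom n d (p.1 * b + p.2 * a) := by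
      rw [hOp, map_add, map_mul, map_mul, ← hab]
      linear_combination -substHom n d p.1 * hba
    simp only [C1set, Set.mem_ofPred_eq]
    rw [e]
    refine ⟨fun h => hinj (hcancel ?_), fun h => by rw [h, map_zero, mul_zero]⟩
    rw [h, map_zero, mul_zero]
  have hC1 : O '' C1set n a b = C1set n a b := by
    have : O ⁻¹' C1set n a b = C1set n a b := Set.ext hmem
    conv_lhs => rw [← this]
    exact Set.image_preimage_eq _ hbij.2
  have hcoset (p : R2 n × R2 n) : O '' {q | ∃ c ∈ C2set n a b, q = p + c} =
      {q | ∃ c ∈ C2set n a b, q = O p + c} := by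
    ext q
    constructor
    · rintro ⟨_, ⟨c, hc, rfl⟩, rfl⟩
      exact ⟨O c, hC2 ▸ Set.mem_image_of_mem O hc, hadd p c⟩
    · rintro ⟨c, hc, rfl⟩
      rw [← hC2] at hc
      obtain ⟨c, hc, rfl⟩ := hc
      exact ⟨_, ⟨c, hc, rfl⟩, hadd p c⟩
  refine ⟨⟨hadd, hbij, ?_⟩, ⟨hC2, hC1⟩, ?_, ?_, ?_⟩
  · obtain ⟨σ, hσ⟩ := exists_perm_affine hn0 hcop 0
    obtain ⟨τ, hτ⟩ := exists_perm_affine hn0 hcop 1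
    refine ⟨(Equiv.sumCongr τ.symm σ.symm).trans (Equiv.sumComm _ _), fun p k => ?_⟩
    rw [hOp]
    rcases k with i | i
    · exact coeff_repP_of_perm hn0
        ((AddMonoidHom.mulLeft (xR n)).comp (substHom n d).toAddMonoidHom) τ
        (fun i => by simp [hτ, xR_pow_mod, substHom_xR, pow_succ', pow_mul]) p.2 i
    · exact coeff_repP_of_perm hn0 (substHom n d).toAddMonoidHom σ
        (fun i => by simp [hσ, xR_pow_mod, substHom_xR, pow_mul]) p.1 i
  · obtain ⟨r, hr⟩ := one_add_dvd_one_add_xR_mul_substHom_PmR (n := n) hd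
    refine ⟨_, ⟨r, rfl⟩, ?_⟩
    have hinv := xR_mul_substHom_PmR_mul_PmR hn
    rw [hOp, map_one, ha, hb]
    refine Prod.ext ?_ ?_
    · simp only [Prod.fst_add]
      linear_combination hr - h2
    · simp only [Prod.snd_add]
      linear_combination PmR n d * hr - hinv - PmR n d * h2
  · rw [hcoset, hOp]
  · obtain ⟨r, hr1, hr2⟩ := exists_stabilizer_shift hd hn hu hv
    rw [← ha] at hr1
    rw [← hb] at hr2
    have hOO : O (xR n * substHom n d v, substHom n d u) = (u, v) + (r * a, r * b) := by
      rw [hOp, map_mul, substHom_xR, hr1, hr2, Prod.mk_add_mk]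
    rw [hcoset, hOO]
    ext q
    constructor
    · rintro ⟨_, ⟨s, rfl⟩, rfl⟩
      refine ⟨_, ⟨r + s, rfl⟩, ?_⟩
      ext <;> simp only [Prod.fst_add, Prod.snd_add] <;> ring
    · rintro ⟨_, ⟨s, rfl⟩, rfl⟩
      refine ⟨_, ⟨s - r, rfl⟩, ?_⟩
      ext <;> simp only [Prod.fst_add, Prod.snd_add] <;> ring

end
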